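/- The gap between the distinguishing number and the distinguishing index can be arbitrarily large: for every integer N there exists a finite connected simple graph G with D(G) − D'(G) ≥ N. (In particular, for p ≥ 6 the complete graph K_p satisfies D(K_p) − D'(K_p) = p − 2.) -/

import Mathlib

open SimpleGraph

/-- The distinguishing number of a simple graph `G`: the least `d` such that there is a
vertex labeling with `d` labels preserved only by the trivial automorphism. -/
noncomputable def distinguishingNumber {V : Type*} (G : SimpleGraph V) : ℕ :=
  sInf {d : ℕ | ∃ φ : V → Fin d,
    ∀ f : G ≃g G, (∀ x : V, φ (f x) = φ x) → ∀ x : V, f x = x}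

/-- The distinguishing index of a simple graph `G`: the least `d` such that there is an
edge labeling with `d` labels preserved only by the trivial automorphism. -/
noncomputable def distinguishingIndex {V : Type*} (G : SimpleGraph V) : ℕ :=
  sInf {d : ℕ | ∃ ψ : G.edgeSet → Fin d,
    ∀ f : G ≃g G, (∀ e : G.edgeSet, ψ (f.mapEdgeSet e) = ψ e) → ∀ x : V, f x = x}

def dRel (a b : ℕ) : Prop := a + 1 = b ∨ b + 1 = a ∨ (a = 1 ∧ b = 3) ∨ (a = 3 ∧ b = 1)

def dGraph (p : ℕ) : SimpleGraph (Fin p) where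
  Adj a b := dRel a.1 b.1
  symm := ⟨fun a b h => by unfold dRel at *; omega⟩
  loopless := ⟨fun a h => by unfold dRel at h; omega⟩

theorem dTri (a b c : ℕ) (h1 : dRel a b) (h2 : dRel a c) (h3 : dRel b c) :
    (a = 1 ∨ a = 2 ∨ a = 3) ∧ (b = 1 ∨ b = 2 ∨ b = 3) ∧ (c = 1 ∨ c = 2 ∨ c = 3) ∧
      a ≠ b ∧ a ≠ c ∧ b ≠ c := by
  unfold dRel at *
  rcases h1 with h1 | h1 | h1 | h1 <;> rcases h2 with h2 | h2 | h2 | h2 <;>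
    rcases h3 with h3 | h3 | h3 | h3 <;> omega

theorem dSmall (a b c x y z : ℕ) (h1 : dRel a b) (h2 : dRel a c) (h3 : dRel b c)
    (p01 : dRel x a) (p34 : dRel c y) (p45 : dRel y z)
    (q02 : ¬ dRel x b) (q03 : ¬ dRel x c) (q14 : ¬ dRel a y) (q24 : ¬ dRel b y)
    (i02 : x ≠ b) (i03 : x ≠ c) (i14 : a ≠ y) (i24 : b ≠ y) (i15 : a ≠ z) (i35 : c ≠ z) :
    x = 0 ∧ a = 1 ∧ b = 2 ∧ c = 3 ∧ y = 4 := by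
  obtain ⟨t1, t2, t3, n1, n2, n3⟩ := dTri a b c h1 h2 h3
  clear h1 h2 h3
  unfold dRel at *
  rcases t1 with rfl | rfl | rfl <;> rcases t2 with rfl | rfl | rfl <;>
    first
    | (exfalso; omega)
    | (rcases t3 with rfl | rfl | rfl <;> first | (exfalso; omega) | omega)

theorem dRigid (p : ℕ) (hp : 6 ≤ p) (f : Fin p → Fin p) (hf : Function.Injective f)
    (h : ∀ a b : Fin p, a ≠ b → (dRel (f a).1 (f b).1 ↔ dRel a.1 b.1)) (x : Fin p) :
    f x = x := by
  obtain ⟨g, hg⟩ : ∃ g : ℕ → ℕ, ∀ a : Fin p, (f a).1 = g a.1 :=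
    ⟨fun n => if hn : n < p then (f ⟨n, hn⟩).1 else 0, fun a => by simp⟩
  have hi : ∀ a b, a < p → b < p → a ≠ b → g a ≠ g b := by
    intro a b ha hb hab e
    have := @hf ⟨a, ha⟩ ⟨b, hb⟩ (Fin.ext (by rw [hg, hg]; exact e))
    exact hab (by simpa using this)
  have hr : ∀ a b, a < p → b < p → a ≠ b → (dRel (g a) (g b) ↔ dRel a b) := by
    intro a b ha hb hab
    have := h ⟨a, ha⟩ ⟨b, hb⟩ (by simpa using hab)
    rwa [hg, hg] at this
  have P : ∀ a b, a < p → b < p → a ≠ b → dRel a b → dRel (g a) (g b) :=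
    fun a b ha hb hab => (hr a b ha hb hab).2
  have Q : ∀ a b, a < p → b < p → a ≠ b → ¬ dRel a b → ¬ dRel (g a) (g b) :=
    fun a b ha hb hab hn hm => hn ((hr a b ha hb hab).1 hm)
  have p12 := P 1 2 (by omega) (by omega) (by omega) (by simp [dRel])
  have p13 := P 1 3 (by omega) (by omega) (by omega) (by simp [dRel])
  have p23 := P 2 3 (by omega) (by omega) (by omega) (by simp [dRel])
  have p01 := P 0 1 (by omega) (by omega) (by omega) (by simp [dRel])
  have p34 := P 3 4 (by omega) (by omega) (by omega) (by simp [dRel])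
  have p45 := P 4 5 (by omega) (by omega) (by omega) (by simp [dRel])
  have q02 := Q 0 2 (by omega) (by omega) (by omega) (by simp [dRel])
  have q03 := Q 0 3 (by omega) (by omega) (by omega) (by simp [dRel])
  have q14 := Q 1 4 (by omega) (by omega) (by omega) (by simp [dRel])
  have q24 := Q 2 4 (by omega) (by omega) (by omega) (by simp [dRel])
  have i02 := hi 0 2 (by omega) (by omega) (by omega)
  have i03 := hi 0 3 (by omega) (by omega) (by omega)
  have i14 := hi 1 4 (by omega) (by omega) (by omega)
  have i24 := hi 2 4 (by omega) (by omega) (by omega)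
  have i15 := hi 1 5 (by omega) (by omega) (by omega)
  have i35 := hi 3 5 (by omega) (by omega) (by omega)
  have key := dSmall _ _ _ _ _ _ p12 p13 p23 p01 p34 p45 q02 q03 q14 q24 i02 i03 i14 i24 i15 i35
  obtain ⟨k0, k1, k2, k3, k4⟩ := key
  have ind : ∀ n, n + 4 < p → g (n + 3) = n + 3 ∧ g (n + 4) = n + 4 := by
    intro n
    induction n with
    | zero => intro _; exact ⟨k3, k4⟩
    | succ n ih =>
      intro hn
      obtain ⟨h3, h4⟩ := ih (by omega)
      have h5 := P (n + 4) (n + 1 + 4) (by omega) hn (by omega) (by unfold dRel; omega)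
      have h6 := hi (n + 3) (n + 1 + 4) (by omega) hn (by omega)
      unfold dRel at h5
      refine ⟨h4, ?_⟩
      omega
  apply Fin.ext
  rw [hg]
  obtain ⟨x, hx⟩ := x
  show g x = x
  rcases Nat.lt_or_ge x 4 with h4 | h4
  · interval_cases x <;> assumption
  · obtain ⟨n, rfl⟩ := Nat.exists_eq_add_of_le' h4
    exact (ind n hx).2

theorem dNumber_top (p : ℕ) : distinguishingNumber (⊤ : SimpleGraph (Fin p)) = p := by
  apply le_antisymm
  · exact Nat.sInf_le ⟨id, fun f h x => h x⟩
  · refine le_csInf ⟨p, id, fun f h x => h x⟩ ?_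
    rintro d ⟨φ, hφ⟩
    have hinj : Function.Injective φ := by
      intro a b hab
      have := hφ (Iso.completeGraph (Equiv.swap a b)) (fun x => by
        show φ (Equiv.swap a b x) = φ x
        rw [Equiv.swap_apply_def]
        split_ifs with h1 h2
        · rw [h1, hab]
        · rw [h2, hab]
        · rfl) a
      have h2 : Equiv.swap a b a = a := this
      rw [Equiv.swap_apply_left] at h2
      exact h2.symm
    simpa using Fintype.card_le_of_injective φ hinj

theorem dIndex_top (p : ℕ) (hp : 6 ≤ p) :
    distinguishingIndex (⊤ : SimpleGraph (Fin p)) = 2 := by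
  classical
  have mem : 2 ∈ {d : ℕ | ∃ ψ : (⊤ : SimpleGraph (Fin p)).edgeSet → Fin d,
      ∀ f : (⊤ : SimpleGraph (Fin p)) ≃g (⊤ : SimpleGraph (Fin p)),
        (∀ e : (⊤ : SimpleGraph (Fin p)).edgeSet, ψ (f.mapEdgeSet e) = ψ e) →
          ∀ x : Fin p, f x = x} := by
    refine ⟨fun e => if e.1 ∈ (dGraph p).edgeSet then 1 else 0, fun f hf x => ?_⟩
    refine dRigid p hp f f.injective (fun a b hab => ?_) x
    have := hf ⟨s(a, b), by simpa using hab⟩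
    have e1 : (f.mapEdgeSet ⟨s(a, b), by simpa using hab⟩).1 = s(f a, f b) := rfl
    simp only [e1, mem_edgeSet] at this
    change (dGraph p).Adj (f a) (f b) ↔ (dGraph p).Adj a b
    by_cases h1 : (dGraph p).Adj (f a) (f b) <;> by_cases h2 : (dGraph p).Adj a b <;>
      simp_all
  apply le_antisymm
  · exact Nat.sInf_le mem
  · refine le_csInf ⟨2, mem⟩ ?_
    rintro d ⟨ψ, hψ⟩
    by_contra hd
    have hs : Subsingleton (Fin d) := by
      rw [Fin.subsingleton_iff_le_one]; omega
    have := hψ (Iso.completeGraph (Equiv.swap ⟨0, by omega⟩ ⟨1, by omega⟩))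
      (fun e => Subsingleton.elim _ _) ⟨0, by omega⟩
    have h2 : Equiv.swap (⟨0, by omega⟩ : Fin p) ⟨1, by omega⟩ ⟨0, by omega⟩ = ⟨0, by omega⟩ :=
      this
    rw [Equiv.swap_apply_left] at h2
    simp at h2

/-- The gap between the distinguishing number and the distinguishing index can be arbitrarily
large: for every integer `N` there is a finite connected simple graph `G` with
`D(G) − D'(G) ≥ N`; in particular, for `p ≥ 6` the complete graph `K_p` satisfies
`D(K_p) − D'(K_p) = p − 2`. -/
theorem distinguishingNumber_sub_distinguishingIndex_unbounded :
    (∀ N : ℤ, ∃ (V : Type) (_ : Fintype V) (G : SimpleGraph V),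
      G.Connected ∧
        N ≤ (distinguishingNumber G : ℤ) - (distinguishingIndex G : ℤ)) ∧
    (∀ p : ℕ, 6 ≤ p →
      (distinguishingNumber (⊤ : SimpleGraph (Fin p)) : ℤ) -
        (distinguishingIndex (⊤ : SimpleGraph (Fin p)) : ℤ) = (p : ℤ) - 2) := by
  have key : ∀ p : ℕ, 6 ≤ p →
      (distinguishingNumber (⊤ : SimpleGraph (Fin p)) : ℤ) -
        (distinguishingIndex (⊤ : SimpleGraph (Fin p)) : ℤ) = (p : ℤ) - 2 := by
    intro p hp
    rw [dNumber_top, dIndex_top p hp]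
    rfl
  refine ⟨fun N => ?_, key⟩
  refine ⟨Fin (N.toNat + 6), inferInstance, ⊤, connected_top, ?_⟩
  rw [key _ (by omega)]
  push_cast
  omega
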